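/- arXiv:1909.10898 — 3 statements merged into one kernel-verified Lean document; each statement's English description precedes it below -/
import Mathlib

section
/- Let p be a prime, q = p^a a prime power, F_q the finite field with q elements, b ∈ F_q, and k a positive integer with p ∣ k. Then q·P̂_k(b) = binom(q+k−1, k) + v(b)·binom(q/p + k/p − 1, k/p). (Moreover, if p ∤ k, then q·P̂_k(b) = binom(q+k−1, k).) -/
open PowerSeries Finset

/-- The coefficients of `∏ x, (1 - f x X)⁻¹` are the complete homogeneous symmetric sums. -/
theorem PowerSeries.coeff_prod_mk_pow {σ R : Type*} [Fintype σ] [DecidableEq σ] [CommRing R]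
    (f : σ → R) (k : ℕ) :
    coeff k (∏ x, (PowerSeries.mk fun n => f x ^ n : R⟦X⟧)) =
      ∑ m : Sym σ k, ((m : Multiset σ).map f).prod := by
  rw [PowerSeries.coeff_prod]
  symm
  refine Finset.sum_bij (fun m _ => Multiset.toFinsupp (m : Multiset σ)) ?_ ?_ ?_ ?_
  · intro m _
    have hsum : ∑ x, (m : Multiset σ).count x = k := by
      rw [Multiset.sum_count_eq_card fun x _ => mem_univ x, Sym.card_coe]
    exact mem_finsuppAntidiag.2 ⟨hsum, subset_univ _⟩
  · intro m _ n _ h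
    exact Sym.coe_injective (Multiset.toFinsupp.injective h)
  · intro l hl
    rw [mem_finsuppAntidiag] at hl
    refine ⟨⟨Finsupp.toMultiset l, ?_⟩, mem_univ _, ?_⟩
    · rw [Finsupp.card_toMultiset, Finsupp.sum_fintype _ _ (by simp)]
      exact hl.1
    · simp
  · intro m _
    rw [Finset.prod_multiset_map_count]
    simp only [coeff_mk, Multiset.toFinsupp_apply]
    refine Finset.prod_subset (subset_univ _) fun x _ hx => ?_
    rw [Multiset.mem_toFinset] at hx
    simp [Multiset.count_eq_zero_of_notMem hx]

theorem PowerSeries.mk_pow_mul_one_sub {R : Type*} [CommRing R] (r : R) :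
    (PowerSeries.mk fun n => r ^ n : R⟦X⟧) * (1 - C r * X) = 1 := by
  have h := congrArg (rescale r) (mk_one_mul_one_sub_eq_one R)
  rw [map_mul, map_sub, map_one, rescale_X] at h
  convert h using 2
  ext n
  simp [coeff_rescale]

/-- `1 - X ^ p` splits as the product of `1 - ζ X` over the `p`-th roots of unity `ζ`. -/
theorem PowerSeries.prod_one_sub_stdAddChar (p : ℕ) [NeZero p] :
    ∏ j : ZMod p, (1 - C (ZMod.stdAddChar j) * X : ℂ⟦X⟧) = 1 - X ^ p := by
  classical
  have hp : 0 < p := NeZero.pos p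
  have hζ := (Complex.isPrimitiveRoot_exp p (NeZero.ne p)).map_of_injective
    (f := (C : ℂ →+* ℂ⟦X⟧)) C_injective
  have hinj : Function.Injective fun j : ZMod p => (C (ZMod.stdAddChar j) : ℂ⟦X⟧) :=
    C_injective.comp ZMod.injective_stdAddChar
  have himage : univ.image (fun j : ZMod p => (C (ZMod.stdAddChar j) : ℂ⟦X⟧)) =
      Polynomial.nthRootsFinset p (1 : ℂ⟦X⟧) := by
    refine Finset.eq_of_subset_of_card_le ?_ ?_
    · intro y hy
      obtain ⟨j, -, rfl⟩ := Finset.mem_image.1 hy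
      rw [Polynomial.mem_nthRootsFinset hp, ← map_pow, ← AddChar.map_nsmul_eq_pow]
      simp
    · rw [hζ.card_nthRootsFinset, Finset.card_image_of_injective _ hinj]
      simp [ZMod.card]
  have h := hζ.pow_sub_pow_eq_prod_sub_mul (x := 1) (y := X) hp
  rw [one_pow] at h
  rw [h, ← himage, Finset.prod_image fun _ _ _ _ e => hinj e]

/-- All fibres of a surjective homomorphism of finite groups have size `|G| / |H|`. -/
theorem AddMonoidHom.card_fiber_mul_card {G H : Type*} [AddGroup G] [Fintype G] [AddGroup H]
    [Fintype H] [DecidableEq H] (T : G →+ H) (hT : Function.Surjective T) (y : H) :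
    #{x | T x = y} * Fintype.card H = Fintype.card G := by
  rw [← Finset.card_univ (α := G),
    Finset.card_eq_sum_card_fiberwise (s := univ) (f := T) (t := univ) (fun _ _ => by simp),
    Finset.sum_congr rfl fun z _ => AddMonoidHom.card_fiber_eq_of_mem_range T (hT z) (hT y)]
  simp [mul_comm]

/-- Complete homogeneous symmetric sums of the values of a character of order `p`. -/
theorem sum_sym_prod_stdAddChar {G : Type*} [AddGroup G] [Fintype G] [DecidableEq G] {p n : ℕ}
    [NeZero p] (T : G →+ ZMod p) (hT : Function.Surjective T) (hn : 0 < n)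
    (hcard : Fintype.card G = n * p) (k : ℕ) :
    ∑ m : Sym G k, ((m : Multiset G).map fun x => (ZMod.stdAddChar (T x) : ℂ)).prod =
      if p ∣ k then ((n + k / p - 1).choose (k / p) : ℂ) else 0 := by
  have hfib (j : ZMod p) : #{x | T x = j} = n := by
    have := T.card_fiber_mul_card hT j
    rw [ZMod.card, hcard] at this
    exact Nat.eq_of_mul_eq_mul_right (NeZero.pos p) this
  have hprod : ∏ x : G, (1 - C (ZMod.stdAddChar (T x)) * X : ℂ⟦X⟧) = (1 - X ^ p) ^ n := by
    rw [← Finset.prod_fiberwise_of_maps_to' (t := univ) (g := T) (fun _ _ => mem_univ _)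
      (fun j => (1 - C (ZMod.stdAddChar j) * X : ℂ⟦X⟧))]
    simp only [Finset.prod_const, hfib]
    rw [Finset.prod_pow, prod_one_sub_stdAddChar]
  have hinv : (∏ x : G, (PowerSeries.mk fun k => ZMod.stdAddChar (T x) ^ k : ℂ⟦X⟧)) *
      (1 - X ^ p) ^ n = 1 := by
    rw [← hprod, ← Finset.prod_mul_distrib]
    exact Finset.prod_eq_one fun x _ => mk_pow_mul_one_sub _
  obtain ⟨d, rfl⟩ : ∃ d, n = d + 1 := ⟨n - 1, by omega⟩
  have hexp := congrArg (expand p (NeZero.ne p)) (mk_add_choose_mul_one_sub_pow_eq_one ℂ d)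
  rw [map_mul, map_pow, map_sub, map_one, expand_X] at hexp
  rw [← coeff_prod_mk_pow, left_inv_eq_right_inv hinv ((mul_comm _ _).trans hexp),
    coeff_expand]
  simp only [coeff_mk]
  rw [show d + 1 + k / p - 1 = d + k / p by rw [Nat.add_right_comm, Nat.add_sub_cancel],
    Nat.choose_symm_add]

theorem card_sym_sum_eq_of_ne_zero {F : Type*} [Field F] [Fintype F] [DecidableEq F] (k : ℕ)
    {b : F} (hb : b ≠ 0) :
    #{m : Sym F k | (m : Multiset F).sum = b} = #{m : Sym F k | (m : Multiset F).sum = 1} := by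
  symm
  refine Finset.card_equiv (Sym.equivCongr (Equiv.mulLeft₀ b hb)) fun m => ?_
  have hmul : ((m : Multiset F).map fun x => b * x).sum = b * (m : Multiset F).sum := by
    simpa using Multiset.sum_map_mul_left (s := (m : Multiset F)) (a := b) (f := id)
  simp [hmul, hb]

theorem sum_sym_addChar {F : Type*} [Field F] [Fintype F] [DecidableEq F] (k : ℕ)
    {ψ : AddChar F ℂ} (hψ : ψ ≠ 1) :
    ∑ m : Sym F k, ψ (m : Multiset F).sum =
      #{m : Sym F k | (m : Multiset F).sum = 0} - #{m : Sym F k | (m : Multiset F).sum = 1} := by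
  rw [← Finset.sum_fiberwise_of_maps_to' (t := univ) (g := fun m : Sym F k => (m : Multiset F).sum)
    (fun _ _ => mem_univ _) (fun y => ψ y)]
  have h0 := AddChar.sum_eq_zero_of_ne_one hψ
  rw [← Finset.add_sum_erase _ _ (mem_univ (0 : F)), AddChar.map_zero_eq_one] at h0
  simp only [Finset.sum_const, nsmul_eq_mul]
  rw [← Finset.add_sum_erase _ _ (mem_univ (0 : F)), Finset.sum_congr rfl fun y hy => by
    rw [card_sym_sum_eq_of_ne_zero k (Finset.ne_of_mem_erase hy)], ← Finset.mul_sum,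
    AddChar.map_zero_eq_one]
  linear_combination (#{m : Sym F k | (m : Multiset F).sum = 1} : ℂ) * h0

theorem card_sym_sum_zero_add {F : Type*} [Field F] [Fintype F] [DecidableEq F] (k : ℕ) :
    (#{m : Sym F k | (m : Multiset F).sum = 0} : ℤ) +
      (Fintype.card F - 1) * #{m : Sym F k | (m : Multiset F).sum = 1} =
        (Fintype.card F + k - 1).choose k := by
  rw [← Sym.card_sym_eq_choose, ← Finset.card_univ (α := Sym F k),
    Finset.card_eq_sum_card_fiberwise (s := univ) (f := fun m : Sym F k => (m : Multiset F).sum)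
      (t := univ) (fun _ _ => by simp), ← Finset.add_sum_erase _ _ (mem_univ (0 : F)),
    Finset.sum_congr rfl fun y hy => card_sym_sum_eq_of_ne_zero k (Finset.ne_of_mem_erase hy)]
  simp [Finset.card_erase_of_mem, Nat.cast_sub Fintype.card_pos]

/-- The excess of the number of zero-sum multisets over those of any other given sum. -/
theorem card_sym_sum_zero_sub {F : Type*} [Field F] [Fintype F] [DecidableEq F] {p a : ℕ}
    (hp : p.Prime) (ha : 0 < a) (hF : Fintype.card F = p ^ a) (k : ℕ) :
    (#{m : Sym F k | (m : Multiset F).sum = 0} : ℤ) - #{m : Sym F k | (m : Multiset F).sum = 1} =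
      if p ∣ k then ((p ^ a / p + k / p - 1).choose (k / p) : ℤ) else 0 := by
  have : Fact p.Prime := ⟨hp⟩
  have hchar : CharP F p := charP_of_card_eq_prime_pow hF
  let _ : Algebra (ZMod p) F := ZMod.algebra F p
  have hT : Function.Surjective (Algebra.trace (ZMod p) F) := Algebra.trace_surjective _ _
  let T : F →+ ZMod p := (Algebra.trace (ZMod p) F).toAddMonoidHom
  let ψ : AddChar F ℂ := ZMod.stdAddChar.compAddMonoidHom T
  have hψ : ψ ≠ 1 := by
    intro h
    obtain ⟨x, hx⟩ := hT 1
    have hx1 : ZMod.stdAddChar (T x) = (1 : ℂ) := DFunLike.congr_fun h x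
    rw [show T x = 1 from hx, ← AddChar.map_zero_eq_one (ZMod.stdAddChar (N := p))] at hx1
    exact one_ne_zero (ZMod.injective_stdAddChar hx1)
  have hdvd : p ∣ p ^ a := dvd_pow_self p ha.ne'
  have key := sum_sym_prod_stdAddChar T hT
    (Nat.div_pos (Nat.le_of_dvd (pow_pos hp.pos a) hdvd) hp.pos)
    (hF.trans (Nat.div_mul_cancel hdvd).symm) k
  have hmul (m : Multiset F) : (m.map fun x => (ZMod.stdAddChar (T x) : ℂ)).prod = ψ m.sum := by
    induction m using Multiset.induction_on with
    | empty => simp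
    | cons x m ih => rw [Multiset.map_cons, Multiset.prod_cons, ih, Multiset.sum_cons,
        AddChar.map_add_eq_mul]; rfl
  simp only [hmul] at key
  rw [sum_sym_addChar k hψ] at key
  have : ((#{m : Sym F k | (m : Multiset F).sum = 0} : ℤ) -
      #{m : Sym F k | (m : Multiset F).sum = 1} : ℂ) =
      ((if p ∣ k then ((p ^ a / p + k / p - 1).choose (k / p) : ℤ) else 0 : ℤ) : ℂ) := by
    push_cast
    exact key
  exact_mod_cast this

/-- **Counting all multisets of size `k` over `F_q` with a given sum.**  For `q = p^a`,
`b ∈ F_q` and `k ≥ 1`: if `p ∣ k`, then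
`q·P̂_k(b) = C(q+k−1, k) + v(b)·C(q/p + k/p − 1, k/p)`, and if `p ∤ k`, then
`q·P̂_k(b) = C(q+k−1, k)`.  Here `P̂_k(b)` is the number of multisets of `k` elements of
`F_q` (zero allowed) with sum `b`, and `v(b) = q−1` if `b = 0`, `v(b) = −1` otherwise. -/
theorem multisets_finite_field_sum (p a : ℕ) (hp : p.Prime) (ha : 0 < a)
    (F : Type*) [Field F] [Fintype F] [DecidableEq F] (hF : Fintype.card F = p ^ a)
    (b : F) (k : ℕ) (hk : 0 < k) :
    (p ∣ k →
      (p ^ a : ℤ) * ((Finset.univ.filter fun m : Sym F k =>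
          (m : Multiset F).sum = b).card : ℤ) =
        ((p ^ a + k - 1).choose k : ℤ) +
          (if b = 0 then (p ^ a : ℤ) - 1 else -1) *
            ((p ^ a / p + k / p - 1).choose (k / p) : ℤ)) ∧
    (¬ p ∣ k →
      (p ^ a : ℤ) * ((Finset.univ.filter fun m : Sym F k =>
          (m : Multiset F).sum = b).card : ℤ) =
        ((p ^ a + k - 1).choose k : ℤ)) := by
  have hadd := card_sym_sum_zero_add (F := F) k
  have hsub := card_sym_sum_zero_sub (F := F) hp ha hF k
  rw [hF] at hadd
  push_cast at hadd
  have hb : b ≠ 0 → _ := card_sym_sum_eq_of_ne_zero k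
  constructor <;> intro h
  · rw [if_pos h] at hsub
    split_ifs with h0
    · subst h0
      linear_combination hadd + ((p : ℤ) ^ a - 1) * hsub
    · rw [hb h0]
      linear_combination hadd - hsub
  · rw [if_neg h] at hsub
    by_cases h0 : b = 0
    · subst h0
      linear_combination hadd + ((p : ℤ) ^ a - 1) * hsub
    · rw [hb h0]
      linear_combination hadd - hsub
end

section
/- Let p, k, q be positive integers with p ∣ k and p ∣ q. For 1 ≤ i ≤ k, let p(k,i) be the number of permutations in S_k having exactly i disjoint cycles, each of whose cycle lengths is divisible by p (fixed points counted as cycles of length 1). Then Σ_{i=1}^{k} p(k,i)·q^{i} = k!·binom(q/p + k/p − 1, k/p). (Equivalently, Σ_{τ} q^{c(τ)} = k!·binom(q/p + k/p − 1, k/p), where the sum is over permutations τ ∈ S_k all of whose cycle lengths are divisible by p and c(τ) is the number of cycles of τ.) -/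
/-- The cycle lengths of a permutation of `Fin k`, with fixed points counted
as cycles of length 1. -/
def fullCycleType {k : ℕ} (τ : Equiv.Perm (Fin k)) : Multiset ℕ :=
  τ.cycleType + Multiset.replicate (k - τ.support.card) 1

/-- The order `z_s = ∏ i, i ^ mᵢ * mᵢ!` of the centralizer of a permutation with cycle lengths `s`,
where `mᵢ` is the multiplicity of `i` in `s`. -/
def centralizerOrder (s : Multiset ℕ) : ℕ :=
  s.prod * ∏ n ∈ s.toFinset, (s.count n).factorial

theorem centralizerOrder_cons (j : ℕ) (s : Multiset ℕ) :
    centralizerOrder (j ::ₘ s) = j * (s.count j + 1) * centralizerOrder s := by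
  have hs : ∏ n ∈ s.toFinset, (s.count n).factorial =
      ∏ n ∈ insert j s.toFinset, (s.count n).factorial := by
    refine Finset.prod_subset (Finset.subset_insert _ _) fun x _ hx => ?_
    rw [Multiset.mem_toFinset] at hx
    simp [Multiset.count_eq_zero_of_notMem hx]
  have hj : j ∈ insert j s.toFinset := Finset.mem_insert_self _ _
  have herase : ∏ n ∈ (insert j s.toFinset).erase j, ((j ::ₘ s).count n).factorial =
      ∏ n ∈ (insert j s.toFinset).erase j, (s.count n).factorial :=
    Finset.prod_congr rfl fun x hx => by
      rw [Multiset.count_cons_of_ne (Finset.ne_of_mem_erase hx)]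
  rw [centralizerOrder, centralizerOrder, hs, Multiset.toFinset_cons, Multiset.prod_cons,
    ← Finset.mul_prod_erase _ _ hj, ← Finset.mul_prod_erase _ _ hj, herase,
    Multiset.count_cons_self, Nat.factorial_succ]
  ring

theorem centralizerOrder_pos {s : Multiset ℕ} (hs : ∀ i ∈ s, 0 < i) : 0 < centralizerOrder s :=
  Nat.mul_pos (Multiset.prod_pos hs) (Finset.prod_pos fun _ _ => Nat.factorial_pos _)

theorem centralizerOrder_add_replicate_one {s : Multiset ℕ} (hs : 1 ∉ s) (c : ℕ) :
    centralizerOrder (s + Multiset.replicate c 1) = c.factorial * centralizerOrder s := by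
  induction c with
  | zero => simp
  | succ c ih =>
    rw [Multiset.replicate_succ, Multiset.add_cons, centralizerOrder_cons, ih,
      Multiset.count_add, Multiset.count_eq_zero_of_notMem hs, Multiset.count_replicate_self,
      Nat.factorial_succ]
    ring

theorem fullCycleType_eq_iff {k : ℕ} (τ : Equiv.Perm (Fin k)) (l : k.Partition) :
    fullCycleType τ = l.parts ↔ τ.cycleType = l.parts.filter (2 ≤ ·) := by
  have hparts : l.parts = l.parts.filter (2 ≤ ·) +
      Multiset.replicate (k - (l.parts.filter (2 ≤ ·)).sum) 1 := by
    have hone : l.parts.filter (fun i => ¬ 2 ≤ i) =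
        Multiset.replicate (l.parts.filter (fun i => ¬ 2 ≤ i)).card 1 := by
      refine Multiset.eq_replicate_card.2 fun i hi => ?_
      have := l.parts_pos (Multiset.mem_of_mem_filter hi)
      have := Multiset.of_mem_filter hi
      omega
    have hadd := Multiset.filter_add_not (2 ≤ ·) l.parts
    have hsum := congrArg Multiset.sum hadd
    rw [Multiset.sum_add, hone, Multiset.sum_replicate, l.parts_sum, smul_eq_mul, mul_one] at hsum
    rw [Nat.sub_eq_of_eq_add' hsum.symm, ← hone, hadd]
  constructor
  · intro h
    rw [← h, fullCycleType, Multiset.filter_add,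
      Multiset.filter_eq_self.2 fun _ => Equiv.Perm.two_le_of_mem_cycleType,
      Multiset.filter_eq_nil.2 fun i hi => by simp [Multiset.eq_of_mem_replicate hi], add_zero]
  · intro h
    rw [hparts, fullCycleType, ← Equiv.Perm.sum_cycleType, h]

theorem sum_fullCycleType {k : ℕ} (τ : Equiv.Perm (Fin k)) : (fullCycleType τ).sum = k := by
  have h := τ.support.card_le_univ
  rw [Fintype.card_fin] at h
  rw [fullCycleType, Multiset.sum_add, Equiv.Perm.sum_cycleType, Multiset.sum_replicate,
    smul_eq_mul, mul_one, Nat.add_sub_cancel' h]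

theorem pos_of_mem_fullCycleType {k : ℕ} {τ : Equiv.Perm (Fin k)} {i : ℕ}
    (hi : i ∈ fullCycleType τ) : 0 < i := by
  rcases Multiset.mem_add.1 hi with h | h
  · exact Equiv.Perm.one_lt_of_mem_cycleType h |>.le
  · rw [Multiset.eq_of_mem_replicate h]
    exact one_pos

/-- The partition of `k` formed by the cycle lengths of a permutation of `Fin k`. -/
def fullCyclePartition {k : ℕ} (τ : Equiv.Perm (Fin k)) : k.Partition where
  parts := fullCycleType τ
  parts_pos := pos_of_mem_fullCycleType
  parts_sum := sum_fullCycleType τ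

theorem card_fullCyclePartition_mul {k : ℕ} (l : k.Partition) :
    (Finset.univ.filter fun τ : Equiv.Perm (Fin k) => fullCyclePartition τ = l).card *
      centralizerOrder l.parts = k.factorial := by
  have hcount := Equiv.Perm.card_of_cycleType_mul_eq (Fin k) (l.parts.filter (2 ≤ ·))
  have hle : (l.parts.filter (2 ≤ ·)).sum ≤ k := by
    have := congrArg Multiset.sum (Multiset.filter_add_not (2 ≤ ·) l.parts)
    rw [Multiset.sum_add, l.parts_sum] at this
    omega
  have hmem : ∀ a ∈ l.parts.filter (2 ≤ ·), 2 ≤ a := fun a ha => Multiset.of_mem_filter ha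
  rw [Fintype.card_fin, if_pos ⟨hle, hmem⟩] at hcount
  obtain ⟨τ, hτ⟩ := (Equiv.Perm.exists_with_cycleType_iff (Fin k)).2
    ⟨by rwa [Fintype.card_fin], hmem⟩
  have hparts := (fullCycleType_eq_iff τ l).2 hτ
  have hone : 1 ∉ l.parts.filter (2 ≤ ·) := fun h => absurd (hmem 1 h) (by norm_num)
  have hz : centralizerOrder l.parts = (k - (l.parts.filter (2 ≤ ·)).sum).factorial *
      centralizerOrder (l.parts.filter (2 ≤ ·)) := by
    rw [← centralizerOrder_add_replicate_one hone, ← hτ, Equiv.Perm.sum_cycleType, ← hparts]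
    rfl
  rw [hz, centralizerOrder, ← mul_assoc (Nat.factorial _), ← hcount]
  congr 2
  ext σ
  simp only [Finset.mem_filter, Finset.mem_univ, true_and]
  rw [← fullCycleType_eq_iff, Nat.Partition.ext_iff]
  rfl

/-- The cycle index sum `∑ q ^ ℓ(l) / z_l` over the partitions `l` of `k` all of whose parts are
divisible by `p`. -/
noncomputable def cycleIndexSum (p q k : ℕ) : ℚ :=
  ∑ l : k.Partition with ∀ i ∈ l.parts, p ∣ i,
    (q : ℚ) ^ l.parts.card / centralizerOrder l.parts

theorem sum_perm_eq_factorial_mul_cycleIndexSum (p q k : ℕ) :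
    ((∑ τ : Equiv.Perm (Fin k) with ∀ i ∈ fullCycleType τ, p ∣ i,
      q ^ (fullCycleType τ).card : ℕ) : ℚ) = k.factorial * cycleIndexSum p q k := by
  push_cast
  rw [cycleIndexSum, Finset.mul_sum, Finset.sum_filter, Finset.sum_filter,
    ← Finset.sum_fiberwise Finset.univ fullCyclePartition]
  refine Finset.sum_congr rfl fun l _ => ?_
  have hconst : ∀ τ ∈ Finset.univ.filter fun τ : Equiv.Perm (Fin k) => fullCyclePartition τ = l,
      (if ∀ i ∈ fullCycleType τ, p ∣ i then (q : ℚ) ^ (fullCycleType τ).card else 0) =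
        if ∀ i ∈ l.parts, p ∣ i then (q : ℚ) ^ l.parts.card else 0 := by
    intro τ hτ
    rw [← (Finset.mem_filter.1 hτ).2]
    rfl
  rw [Finset.sum_congr rfl hconst, Finset.sum_const, nsmul_eq_mul]
  have hz : (centralizerOrder l.parts : ℚ) ≠ 0 :=
    Nat.cast_ne_zero.2 (centralizerOrder_pos fun _ h => l.parts_pos h).ne'
  rw [← card_fullCyclePartition_mul l]
  split_ifs
  · push_cast
    field_simp
  · simp

theorem sum_partition_count_mul (p q : ℕ) {k j : ℕ} (hj : 0 < j) (hjk : j ≤ k) (hpj : p ∣ j) :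
    ∑ l : k.Partition with ∀ i ∈ l.parts, p ∣ i,
      ((j * l.parts.count j : ℕ) : ℚ) * ((q : ℚ) ^ l.parts.card / centralizerOrder l.parts) =
    q * cycleIndexSum p q (k - j) := by
  rw [cycleIndexSum, Finset.mul_sum]
  symm
  let addPart : (k - j).Partition → k.Partition := fun m =>
    { parts := j ::ₘ m.parts
      parts_pos := fun hi => (Multiset.mem_cons.1 hi).elim (fun h => h ▸ hj) m.parts_pos
      parts_sum := by rw [Multiset.sum_cons, m.parts_sum, Nat.add_sub_cancel' hjk] }
  have hinj : Function.Injective addPart := fun a b hab =>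
    Nat.Partition.ext ((Multiset.cons_inj_right j).1 (congrArg Nat.Partition.parts hab))
  refine Finset.sum_of_injOn addPart hinj.injOn ?_ ?_ ?_
  · intro m hm
    simpa [addPart, hpj] using hm
  · intro l hl hnot
    have hmem : j ∉ l.parts := by
      intro hmem
      refine hnot ⟨⟨l.parts.erase j, fun h => l.parts_pos (Multiset.mem_of_mem_erase h), ?_⟩, ?_, ?_⟩
      · have := congrArg Multiset.sum (Multiset.cons_erase hmem)
        rw [Multiset.sum_cons, l.parts_sum] at this
        omega
      · simp only [Finset.coe_filter, Finset.mem_univ, true_and, Set.mem_ofPred_eq]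
        exact fun i hi => (Finset.mem_filter.1 hl).2 i (Multiset.mem_of_mem_erase hi)
      · exact Nat.Partition.ext (Multiset.cons_erase hmem)
    simp [Multiset.count_eq_zero_of_notMem hmem]
  · intro m _
    have hz : (centralizerOrder m.parts : ℚ) ≠ 0 :=
      Nat.cast_ne_zero.2 (centralizerOrder_pos fun _ h => m.parts_pos h).ne'
    have hj' : (j : ℚ) ≠ 0 := Nat.cast_ne_zero.2 hj.ne'
    have hc : (m.parts.count j : ℚ) + 1 ≠ 0 := by positivity
    simp only [addPart, centralizerOrder_cons, Multiset.count_cons_self, Multiset.card_cons]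
    push_cast
    field_simp
    ring

theorem mul_cycleIndexSum (p q k : ℕ) :
    k * cycleIndexSum p q k =
      ∑ j ∈ Finset.Icc 1 k with p ∣ j, q * cycleIndexSum p q (k - j) := by
  have hk : ∀ l ∈ Finset.univ.filter fun l : k.Partition => ∀ i ∈ l.parts, p ∣ i,
      (k : ℚ) = ∑ j ∈ Finset.Icc 1 k with p ∣ j, ((j * l.parts.count j : ℕ) : ℚ) := by
    intro l hl
    rw [← Nat.cast_sum]
    congr 1
    conv_lhs => rw [← l.parts_sum, Finset.sum_multiset_count]
    simp only [smul_eq_mul, mul_comm]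
    refine Finset.sum_subset (fun j hj => ?_) fun j _ hj => ?_
    · rw [Multiset.mem_toFinset] at hj
      exact Finset.mem_filter.2 ⟨Finset.mem_Icc.2 ⟨l.parts_pos hj,
        Nat.Partition.le_of_mem_parts hj⟩, (Finset.mem_filter.1 hl).2 j hj⟩
    · rw [Multiset.mem_toFinset] at hj
      simp [Multiset.count_eq_zero_of_notMem hj]
  conv_lhs => rw [cycleIndexSum, Finset.mul_sum]
  rw [Finset.sum_congr rfl fun l hl => congrArg (· * _) (hk l hl)]
  simp only [Finset.sum_mul]
  rw [Finset.sum_comm]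
  refine Finset.sum_congr rfl fun j hj => ?_
  obtain ⟨hj, hpj⟩ := Finset.mem_filter.1 hj
  obtain ⟨hj, hjk⟩ := Finset.mem_Icc.1 hj
  exact sum_partition_count_mul p q hj hjk hpj

theorem cycleIndexSum_zero (p q : ℕ) : cycleIndexSum p q 0 = 1 := by
  simp [cycleIndexSum, centralizerOrder, Finset.filter_true_of_mem]

theorem mul_cycleIndexSum_mul {p : ℕ} (hp : 0 < p) (m n : ℕ) :
    n * cycleIndexSum p (p * m) (p * n) =
      m * ∑ i ∈ Finset.range n, cycleIndexSum p (p * m) (p * i) := by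
  have hp' : (p : ℚ) ≠ 0 := Nat.cast_ne_zero.2 hp.ne'
  have hreindex : ∑ j ∈ Finset.Icc 1 (p * n) with p ∣ j, cycleIndexSum p (p * m) (p * n - j) =
      ∑ i ∈ Finset.range n, cycleIndexSum p (p * m) (p * i) := by
    symm
    refine Finset.sum_bij (fun i _ => p * (n - i)) ?_ ?_ ?_ ?_
    · intro i hi
      rw [Finset.mem_range] at hi
      exact Finset.mem_filter.2 ⟨Finset.mem_Icc.2 ⟨Nat.mul_pos hp (by omega),
        Nat.mul_le_mul_left p (by omega)⟩, dvd_mul_right _ _⟩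
    · intro a ha b hb hab
      rw [Finset.mem_range] at ha hb
      have := Nat.eq_of_mul_eq_mul_left hp hab
      omega
    · intro j hj
      obtain ⟨hj, c, rfl⟩ := Finset.mem_filter.1 hj
      obtain ⟨hpos, hle⟩ := Finset.mem_Icc.1 hj
      have hc : 0 < c := Nat.pos_of_mul_pos_left hpos
      have hcn : c ≤ n := Nat.le_of_mul_le_mul_left hle hp
      exact ⟨n - c, Finset.mem_range.2 (by omega), by rw [Nat.sub_sub_self hcn]⟩
    · intro i hi
      rw [Finset.mem_range] at hi
      rw [← Nat.mul_sub, Nat.sub_sub_self hi.le]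
  have hrec := mul_cycleIndexSum p (p * m) (p * n)
  rw [← Finset.mul_sum, hreindex] at hrec
  push_cast at hrec
  rw [mul_assoc, mul_assoc] at hrec
  exact mul_left_cancel₀ hp' hrec

theorem succ_mul_sum_range_choose (m n : ℕ) :
    (m + 1) * ∑ i ∈ Finset.range n, (m + i).choose i = n * (m + n).choose n := by
  induction n with
  | zero => simp
  | succ n ih =>
    rw [Finset.sum_range_succ, mul_add, ih, mul_comm (n + 1), ← add_assoc,
      ← Nat.add_one_mul_choose_eq]
    ring

theorem cycleIndexSum_mul_succ {p : ℕ} (hp : 0 < p) (m n : ℕ) :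
    cycleIndexSum p (p * (m + 1)) (p * n) = (m + n).choose n := by
  induction n using Nat.strong_induction_on with
  | _ n ih =>
    rcases Nat.eq_zero_or_pos n with rfl | hn
    · simp [cycleIndexSum_zero]
    · have hn' : (n : ℚ) ≠ 0 := Nat.cast_ne_zero.2 hn.ne'
      refine mul_left_cancel₀ hn' ?_
      rw [mul_cycleIndexSum_mul hp, Finset.sum_congr rfl fun i hi => ih i (Finset.mem_range.1 hi)]
      exact_mod_cast succ_mul_sum_range_choose m n


/-- **Lemma of Li–Wan.**  If `p ∣ k` and `p ∣ q`, then
`Σ_τ q^{c(τ)} = k!·C(q/p + k/p − 1, k/p)`, the sum being over permutations `τ ∈ S_k` all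
of whose cycle lengths are divisible by `p`, where `c(τ)` is the number of cycles of `τ`
(fixed points counted as cycles of length 1). -/
theorem perm_cycle_divisible_count (p k q : ℕ) (hp : 0 < p) (hk : 0 < k) (hq : 0 < q)
    (hpk : p ∣ k) (hpq : p ∣ q) :
    ∑ τ ∈ Finset.univ.filter
        (fun τ : Equiv.Perm (Fin k) => ∀ ℓ ∈ fullCycleType τ, p ∣ ℓ),
      q ^ (fullCycleType τ).card =
      k.factorial * (q / p + k / p - 1).choose (k / p) := by
  obtain ⟨n, rfl⟩ := hpk
  obtain ⟨m, rfl⟩ := hpq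
  obtain ⟨m, rfl⟩ := Nat.exists_eq_add_one.2 (Nat.pos_of_mul_pos_left hq)
  have h := sum_perm_eq_factorial_mul_cycleIndexSum p (p * (m + 1)) (p * n)
  rw [cycleIndexSum_mul_succ hp] at h
  rw [Nat.mul_div_cancel_left _ hp, Nat.mul_div_cancel_left _ hp,
    show m + 1 + n - 1 = m + n by omega]
  exact_mod_cast h
end

section
/- Let n ≥ 1 and q ≥ 2 be integers, and let F be the (finite) set of all multisets of elements of ℤ/nℤ whose elements sum to 0 and in which every element has multiplicity strictly less than q. Then n·|F| = Σ_{e ∣ n, gcd(e,q)=1} φ(e)·q^{n/e}, where the sum is over positive divisors e of n that are coprime to q and φ is Euler's totient function. -/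
open Finset

/-- Multisets over a finite commutative additive monoid `G` with prescribed sum and multiplicities
below `q` correspond to functions `G → {0, …, q - 1}`, by sending a multiset to its
multiplicities. -/
theorem ncard_multiset_sum_eq_count_lt {G : Type*} [AddCommMonoid G] [Fintype G] [DecidableEq G]
    (q : ℕ) (s : G) :
    Set.ncard {m : Multiset G | m.sum = s ∧ ∀ a : G, m.count a < q} =
      #{f ∈ Fintype.piFinset fun _ : G => range q | ∑ a, f a • a = s} := by
  have count_sum (f : G → ℕ) (b : G) :
      (∑ a, f a • ({a} : Multiset G)).count b = f b := by
    simp [Multiset.count_sum', Multiset.count_nsmul, Multiset.count_singleton]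
  rw [← Set.ncard_coe_finset]
  symm
  refine Set.ncard_congr (fun f _ => ∑ a, f a • ({a} : Multiset G)) ?_ ?_ ?_
  · intro f hf
    simp only [coe_filter, Fintype.mem_piFinset, mem_range, Set.mem_ofPred_eq] at hf
    refine ⟨?_, fun a => by rw [count_sum]; exact hf.1 a⟩
    rw [Multiset.sum_sum]
    simpa [Multiset.sum_nsmul] using hf.2
  · intro f g _ _ h
    funext b
    rw [← count_sum f, ← count_sum g, h]
  · rintro m ⟨hm, hlt⟩
    refine ⟨fun a => m.count a, ?_, ?_⟩
    · simp only [coe_filter, Fintype.mem_piFinset, mem_range, Set.mem_ofPred_eq]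
      refine ⟨hlt, ?_⟩
      rw [← hm, Finset.sum_multiset_count m]
      symm
      exact sum_subset (subset_univ _) fun a _ ha => by
        rw [Multiset.count_eq_zero_of_notMem (by simpa using ha), zero_smul]
    · ext b
      exact count_sum _ b

theorem AddChar.map_sum_eq_prod {ι A M : Type*} [AddCommMonoid A] [CommMonoid M]
    (ψ : AddChar A M) (s : Finset ι) (f : ι → A) : ψ (∑ i ∈ s, f i) = ∏ i ∈ s, ψ (f i) :=
  map_prod ψ.toMonoidHom (fun i => Multiplicative.ofAdd (f i)) s

namespace ZMod

variable {n : ℕ} [NeZero n]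

/-- The annihilator of `k` in `ZMod n` has `n / addOrderOf k` elements. -/
theorem card_filter_mul_eq_zero (k : ZMod n) :
    #{a : ZMod n | k * a = 0} = n / addOrderOf k := by
  have hker := (AddMonoidHom.mulLeft k).ker.card_mul_index
  have hrange : (AddMonoidHom.mulLeft k).range = AddSubgroup.zmultiples k := by
    ext x
    rw [AddMonoidHom.mem_range, AddSubgroup.mem_zmultiples_iff]
    constructor
    · rintro ⟨a, rfl⟩
      exact ⟨a.val, by simp [mul_comm]⟩
    · rintro ⟨z, rfl⟩
      exact ⟨z, by simp [mul_comm]⟩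
  rw [AddSubgroup.index_ker, hrange, Nat.card_zmultiples, Nat.card_zmod] at hker
  have hcard : Nat.card (AddMonoidHom.mulLeft k).ker = #{a : ZMod n | k * a = 0} := by
    rw [← Fintype.card_subtype, ← Nat.card_eq_fintype_card]
    rfl
  rw [← hcard]
  exact Nat.eq_div_of_mul_eq_left (addOrderOf_pos k).ne' hker

theorem stdAddChar_eq_one_iff (a : ZMod n) : stdAddChar a = 1 ↔ a = 0 := by
  rw [← AddChar.map_zero_eq_one (stdAddChar (N := n)), injective_stdAddChar.eq_iff]

/-- If `q` is coprime to the additive order of `k`, multiplication by `q` agrees on the multiples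
of `k` with multiplication by a unit of `ZMod n`. -/
theorem exists_unit_mul_eq_natCast_mul {k : ZMod n} {q : ℕ} (h : (addOrderOf k).Coprime q) :
    ∃ u : (ZMod n)ˣ, k * u = q * k := by
  have hd : addOrderOf k ∣ n := by simpa using addOrderOf_dvd_card (x := k)
  obtain ⟨u, hu⟩ := unitsMap_surjective hd (unitOfCoprime q h.symm)
  refine ⟨u, ?_⟩
  have hval : ((u : ZMod n).val : ZMod (addOrderOf k)) = (q : ZMod (addOrderOf k)) := by
    have := congrArg Units.val hu
    rw [coe_unitOfCoprime] at this
    rw [← this, unitsMap_val, natCast_val]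
  rw [natCast_eq_natCast_iff] at hval
  have := (nsmul_eq_nsmul_iff_modEq (x := k)).2 hval
  rw [nsmul_eq_mul, nsmul_eq_mul, natCast_zmod_val, mul_comm] at this
  exact this

theorem stdAddChar_geom_sum_mul (q : ℕ) (a : ZMod n) :
    (∑ j ∈ range q, stdAddChar a ^ j) * (stdAddChar a - 1) =
      stdAddChar ((q : ZMod n) * a) - 1 := by
  rw [geom_sum_mul, ← nsmul_eq_mul, AddChar.map_nsmul_eq_pow]

/-- The product over `a` of the truncated geometric series at the roots of unity attached
to `k * a`. -/
theorem prod_geom_sum_stdAddChar (q : ℕ) (k : ZMod n) :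
    ∏ a : ZMod n, ∑ j ∈ range q, stdAddChar (k * a) ^ j =
      if (addOrderOf k).gcd q = 1 then (q : ℂ) ^ (n / addOrderOf k) else 0 := by
  split_ifs with h
  · obtain ⟨u, hu⟩ := exists_unit_mul_eq_natCast_mul h
    rw [← prod_filter_mul_prod_filter_not univ (fun a => k * a = 0)]
    have hzero : ∏ a : ZMod n with k * a = 0, ∑ j ∈ range q, stdAddChar (k * a) ^ j =
        (q : ℂ) ^ (n / addOrderOf k) := by
      rw [← card_filter_mul_eq_zero, ← prod_const]
      refine prod_congr rfl fun a ha => ?_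
      simp [(mem_filter.1 ha).2]
    have hne : ∏ a : ZMod n with ¬ k * a = 0, (stdAddChar (k * a) - 1 : ℂ) ≠ 0 :=
      prod_ne_zero_iff.2 fun a ha =>
        sub_ne_zero.2 ((stdAddChar_eq_one_iff _).not.2 (mem_filter.1 ha).2)
    have hone : ∏ a : ZMod n with ¬ k * a = 0,
        ∑ j ∈ range q, stdAddChar (k * a) ^ j = (1 : ℂ) := by
      apply mul_right_cancel₀ hne
      rw [one_mul, ← prod_mul_distrib]
      simp_rw [stdAddChar_geom_sum_mul]
      refine prod_equiv u.mulLeft (fun a => ?_) fun a _ => ?_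
      · simp [mul_left_comm k]
      · rw [Units.mulLeft_apply, ← mul_assoc k, hu, mul_assoc]
    rw [hzero, hone, mul_one]
  · obtain ⟨p, hp, hpd⟩ := Nat.exists_prime_and_dvd h
    obtain ⟨c, hc⟩ := hpd.trans (Nat.gcd_dvd_left _ _)
    obtain ⟨r, hr⟩ := hpd.trans (Nat.gcd_dvd_right _ _)
    have hpos := addOrderOf_pos k
    have hcpos : 0 < c := Nat.pos_of_ne_zero fun h0 => by simp [hc, h0] at hpos
    have hkc : k * c ≠ 0 := by
      intro h0
      have := addOrderOf_dvd_of_nsmul_eq_zero (x := k) (n := c) (by rw [nsmul_eq_mul, mul_comm, h0])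
      have hle := Nat.le_of_dvd hcpos this
      have := hp.two_le
      nlinarith
    have hqkc : (q : ZMod n) * (k * c) = 0 := by
      have h0 := addOrderOf_nsmul_eq_zero k
      rw [nsmul_eq_mul, hc, Nat.cast_mul] at h0
      rw [hr, Nat.cast_mul]
      linear_combination (r : ZMod n) * h0
    refine prod_eq_zero (mem_univ (c : ZMod n)) ?_
    refine (mul_eq_zero.1 ?_).resolve_right (sub_ne_zero.2 ((stdAddChar_eq_one_iff _).not.2 hkc))
    rw [stdAddChar_geom_sum_mul, hqkc, AddChar.map_zero_eq_one, sub_self]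

/-- A sum over `ZMod n` of a function of the additive order, grouped by order. -/
theorem sum_comp_addOrderOf {R : Type*} [Semiring R] (g : ℕ → R) :
    ∑ k : ZMod n, g (addOrderOf k) = ∑ e ∈ n.divisors, (e.totient : R) * g e := by
  rw [← sum_fiberwise_of_maps_to (s := univ) (t := n.divisors) (g := addOrderOf) fun k _ =>
    Nat.mem_divisors.2 ⟨by simpa using addOrderOf_dvd_card (x := k), NeZero.ne n⟩]
  refine sum_congr rfl fun e he => ?_
  rw [← IsAddCyclic.card_addOrderOf_eq_totient (α := ZMod n)
    (by simpa using Nat.dvd_of_mem_divisors he), ← nsmul_eq_mul, ← sum_const]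
  exact sum_congr rfl fun k hk => by rw [(mem_filter.1 hk).2]

/-- Character-sum expansion of the number of weighted zero sums. -/
theorem card_mul_card_filter_sum_smul_eq_zero (q : ℕ) :
    (n : ℂ) * #{f ∈ Fintype.piFinset fun _ : ZMod n => range q | ∑ a, f a • a = 0} =
      ∑ k : ZMod n, ∏ a : ZMod n, ∑ j ∈ range q, stdAddChar (k * a) ^ j := by
  simp_rw [prod_univ_sum]
  rw [sum_comm, mul_comm, ← nsmul_eq_mul, ← sum_const, sum_filter]
  refine sum_congr rfl fun f _ => ?_
  have := AddChar.sum_mulShift (∑ a, f a • a) (isPrimitive_stdAddChar n)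
  rw [ZMod.card] at this
  rw [Nat.cast_ite, Nat.cast_zero] at this
  rw [← this]
  refine sum_congr rfl fun k _ => ?_
  rw [mul_sum, AddChar.map_sum_eq_prod]
  exact prod_congr rfl fun a _ => by rw [mul_smul_comm, AddChar.map_nsmul_eq_pow]

end ZMod

/-- **Counting zero-sum multisets with bounded multiplicities.**  For `n ≥ 1` and
`q ≥ 2`, `n` times the number of multisets over `ℤ/nℤ` with zero sum and every
multiplicity strictly less than `q` equals `Σ_{e ∣ n, gcd(e,q)=1} φ(e)·q^{n/e}`. -/
theorem zero_sum_multisets_count (n q : ℕ) [NeZero n] (hn : 1 ≤ n) (hq : 2 ≤ q) :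
    n * Set.ncard {m : Multiset (ZMod n) | m.sum = 0 ∧ ∀ a : ZMod n, m.count a < q} =
      ∑ e ∈ n.divisors.filter (fun e => Nat.gcd e q = 1),
        Nat.totient e * q ^ (n / e) := by
  rw [ncard_multiset_sum_eq_count_lt, sum_filter]
  have h := ZMod.card_mul_card_filter_sum_smul_eq_zero (n := n) q
  simp_rw [ZMod.prod_geom_sum_stdAddChar] at h
  rw [ZMod.sum_comp_addOrderOf fun e => if e.gcd q = 1 then (q : ℂ) ^ (n / e) else 0] at h
  simp_rw [mul_ite, mul_zero] at h
  exact_mod_cast h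
end
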